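/- arXiv:math/0608759 — 2 statements merged into one kernel-verified Lean document; each statement's English description precedes it below -/
import Mathlib

section
/- If F : T → T is a polynomial-like branched covering of a simplicial tree, then its local degree function is unique: if deg₁ and deg₂ are both local degree functions for F, then deg₁(e) = deg₂(e) for every edge e and deg₁(v) = deg₂(v) for every vertex v. -/
open SimpleGraph Function Opposite

/-- A locally finite simplicial tree together with a self-map that is a
branched covering: a simplicial map (edges map onto edges) such that the
induced map on edges adjacent to any vertex is surjective onto the edges
adjacent to the image vertex, and every vertex has finitely many preimages. -/
structure TreeDyn (V : Type) where
  G : SimpleGraph V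
  isTree : G.IsTree
  locFin : ∀ v : V, (G.neighborSet v).Finite
  F : V → V
  adjMap : ∀ ⦃v w : V⦄, G.Adj v w → G.Adj (F v) (F w)
  edgeSurj : ∀ ⦃v w' : V⦄, G.Adj (F v) w' → ∃ w : V, G.Adj v w ∧ F w = w'
  finFibers : ∀ v' : V, {v : V | F v = v'}.Finite

namespace TreeDyn

variable {V : Type}

/-- A local degree function for the branched covering `T.F`: positive on
vertices and edges (edges adjacent to `v` are recorded by their other
endpoint), symmetric on edges, satisfying the Riemann–Hurwitz style
inequality `2 deg(v) - 2 ≥ Σ (deg e - 1)` at each vertex, and the local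
equality `deg v = Σ {deg e' : e' adjacent to v, F(e') = F(e)}` for each
edge `e` adjacent to `v`. -/
def IsLocalDeg (T : TreeDyn V) (dV : V → ℕ) (dE : V → V → ℕ) : Prop :=
  (∀ v w : V, dE v w = dE w v) ∧
  (∀ v : V, 0 < dV v) ∧
  (∀ ⦃v w : V⦄, T.G.Adj v w → 0 < dE v w) ∧
  (∀ v : V, (∑ᶠ w ∈ T.G.neighborSet v, (dE v w - 1)) + 2 ≤ 2 * dV v) ∧
  (∀ ⦃v w : V⦄, T.G.Adj v w →
    dV v = ∑ᶠ w' ∈ {w' : V | T.G.Adj v w' ∧ T.F w' = T.F w}, dE v w')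

/-- `x` and `y` are in the same grand orbit if `F^[n] x = F^[m] y` for some `n, m > 0`. -/
def GrandOrbit (T : TreeDyn V) (x y : V) : Prop :=
  ∃ n m : ℕ, 0 < n ∧ 0 < m ∧ T.F^[n] x = T.F^[m] y

end TreeDyn

/-- The natural topology on the space of ends of a graph: the subspace
topology induced from the product of the (discrete) spaces of components
of complements of finite sets. -/
def endTop {V : Type} (G : SimpleGraph V) : TopologicalSpace G.end :=
  TopologicalSpace.induced Subtype.val
    (⨅ K : (Finset V)ᵒᵖ, TopologicalSpace.induced (fun f => f K) ⊥)

/-- An end is isolated if it is an isolated point of the space of ends. -/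
def IsIsolatedEnd {V : Type} (G : SimpleGraph V) (e : G.end) : Prop :=
  @IsOpen G.end (endTop G) {e}

namespace TreeDyn

variable {V : Type}

/-- `T` is polynomial-like with distinguished end `infty`:
(II) a local degree function exists, (I) `infty` is the unique isolated end,
(III) no vertex has valence one, and (IV) the grand orbit of every vertex
contains a vertex of valence at least three. -/
def IsPolyLike (T : TreeDyn V) (infty : T.G.end) : Prop :=
  (∃ dV dE, T.IsLocalDeg dV dE) ∧
  IsIsolatedEnd T.G infty ∧
  (∀ e : T.G.end, IsIsolatedEnd T.G e → e = infty) ∧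
  (∀ v : V, (T.G.neighborSet v).ncard ≠ 1) ∧
  (∀ v : V, ∃ w : V, T.GrandOrbit v w ∧ 3 ≤ (T.G.neighborSet w).ncard)

/-- The vertex `x` lies below the vertex `v` (the path from `x` to the
end `infty` passes through `v`): either `x = v`, or `x` and `infty`
determine different components of the complement of `{v}`. -/
def Below (T : TreeDyn V) (infty : T.G.end) (v x : V) : Prop :=
  x = v ∨ ∃ h : x ∉ (({v} : Finset V) : Set V),
    T.G.componentComplMk h ≠ infty.val (op ({v} : Finset V))

/-- The end `p` lies below the vertex `v` (the path from `p` to `infty`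
passes through `v`). -/
def EndBelow (T : TreeDyn V) (infty : T.G.end) (v : V) (p : T.G.end) : Prop :=
  p.val (op ({v} : Finset V)) ≠ infty.val (op ({v} : Finset V))

/-- `v₀` is the base of the tree: the vertex of valence ≥ 3 closest to
`infty`, i.e. every vertex of valence ≥ 3 lies below it. -/
def IsBase (T : TreeDyn V) (infty : T.G.end) (v₀ : V) : Prop :=
  3 ≤ (T.G.neighborSet v₀).ncard ∧
  ∀ w : V, 3 ≤ (T.G.neighborSet w).ncard → T.Below infty v₀ w

open Classical in
/-- The combinatorial height relative to the base `v₀`: `|h v|` is the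
graph distance to `v₀`, with `h v ≥ 0` exactly when `v` lies on the ray
from `v₀` to `infty` (i.e. `v₀` lies below `v`). -/
noncomputable def height (T : TreeDyn V) (infty : T.G.end) (v₀ : V) (v : V) : ℤ :=
  if T.Below infty v v₀ then (T.G.dist v₀ v : ℤ) else -(T.G.dist v₀ v : ℤ)

/-- `Dg` is the global degree of `T.F`: for every edge `{v,w}`, the sum of
the degrees of the edges mapping onto it equals `Dg`. -/
def IsGlobalDeg (T : TreeDyn V) (dE : V → V → ℕ) (Dg : ℕ) : Prop :=
  ∀ ⦃v w : V⦄, T.G.Adj v w →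
    Dg = ∑ᶠ a ∈ {a : V | T.F a = v}, ∑ᶠ b ∈ {b : V | T.G.Adj a b ∧ T.F b = w}, dE a b

/-- The critical multiplicity of a vertex. -/
noncomputable def multV (T : TreeDyn V) (dV : V → ℕ) (dE : V → V → ℕ) (v : V) : ℕ :=
  2 * dV v - 2 - ∑ᶠ w ∈ T.G.neighborSet v, (dE v w - 1)

/-- The critical multiplicity of an end `p ≠ infty`: the limiting
(= minimal) value of `dV` along the path from `infty` to `p`, minus one. -/
noncomputable def multEnd (T : TreeDyn V) (infty : T.G.end) (dV : V → ℕ) (p : T.G.end) : ℕ :=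
  sInf {d : ℕ | ∃ v : V, T.EndBelow infty v p ∧ dV v = d} - 1

/-- `μ` is the mass function: `μ v = 1` for `h(v) ≥ 0` and
`μ(F v) = (deg F / deg v) · μ v`. -/
def IsMass (T : TreeDyn V) (infty : T.G.end) (v₀ : V) (dV : V → ℕ) (Dg : ℕ)
    (μ : V → ℚ) : Prop :=
  (∀ v : V, 0 ≤ T.height infty v₀ v → μ v = 1) ∧
  (∀ v : V, μ (T.F v) = ((Dg : ℚ) / (dV v : ℚ)) * μ v)

end TreeDyn

/-!
The end `∞` orients the tree: every vertex `v` has a parent `p v`, its neighbour towards `∞`. Since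
`∞` is isolated, all high enough vertices of a ray to `∞` have a single child; since no other end is
isolated and there are no leaves, the number of `n`-th generation descendants of a vertex is
unbounded as `n` grows.

`F` commutes with `p`: if `F` reversed an edge, then below some descendant of that edge it would
reverse every edge and follow the unbranched ray to `∞`, so that arbitrarily large generations
would each be sent to a single vertex, whereas the sum of the vertex degrees over a fibre of `F` is
the same for all fibres.

Hence `deg (v, p v) = deg v`, and only the vertex degrees matter. Let `N n v` be the number of
`n`-th generation descendants of `v`. The local equality gives that the degrees of these
descendants sum to `deg v * N n (F v)`, and Riemann–Hurwitz that this sum exceeds `N n v` by at most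
`deg v - 1`. So `N n v ≤ deg v * N n (F v) ≤ N n v + deg v - 1`, and letting `N n (F v)` grow
determines `deg v`.
-/

open Filter

/-- The vertex `x` lies in the component of the complement of `K` selected by the end `e`. The type
ascription exposes `e.val (op K)` as a component, which the functorial definition of ends hides. -/
def EndMem {V : Type*} {G : SimpleGraph V} (e : G.end) (K : Finset V) (x : V) : Prop :=
  x ∈ (show G.ComponentCompl (K : Set V) from e.val (op K))

namespace EndMem

variable {V : Type*} {G : SimpleGraph V} {e e' : G.end} {K L : Finset V} {v w x y : V}

theorem exists_endMem (e : G.end) (K : Finset V) : ∃ x, EndMem e K x :=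
  ComponentCompl.nonempty (show G.ComponentCompl (K : Set V) from e.val (op K))

theorem notMem (h : EndMem e K x) : x ∉ K :=
  ComponentCompl.notMem_of_mem h

theorem of_adj (h : EndMem e K x) (hxy : G.Adj x y) (hy : y ∉ K) : EndMem e K y :=
  ComponentCompl.mem_of_adj x y h hy hxy

theorem mono (h : EndMem e L x) (hKL : K ⊆ L) : EndMem e K x := by
  obtain ⟨hx, hL⟩ := h
  exact ⟨fun hK => hx (hKL hK),
    (end_hom_mk_of_mk G e.prop (CategoryTheory.opHomOfLE hKL : op L ⟶ op K) hx hL.symm).symm⟩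

theorem of_val_eq (h : EndMem e K x) (hK : e.val (op K) = e'.val (op K)) : EndMem e' K x := by
  unfold EndMem
  rwa [← hK]

theorem val_eq (h : EndMem e K x) (h' : EndMem e' K x) : e.val (op K) = e'.val (op K) := by
  obtain ⟨_, h⟩ := h
  obtain ⟨_, h'⟩ := h'
  exact h.symm.trans h'

@[elab_as_elim]
theorem induction {P : V → Prop} (hx : EndMem e K x) (hy : EndMem e K y) (base : P x)
    (step : ∀ a b, G.Adj a b → EndMem e K a → EndMem e K b → P a → P b) : P y := by
  obtain ⟨hyK, hy⟩ := id hy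
  obtain ⟨hxK, hx'⟩ := id hx
  obtain ⟨q⟩ := ConnectedComponent.exact (hx'.trans hy.symm)
  suffices ∀ a b : ((K : Set V)ᶜ : Set V), (G.induce (K : Set V)ᶜ).Walk a b →
      EndMem e K a → P a → P b from this _ _ q hx base
  intro a b q
  induction q with
  | nil => exact fun _ => id
  | @cons a b _ hab _ ih =>
    exact fun ha hPa => ih (ha.of_adj hab b.2) (step a b hab ha (ha.of_adj hab b.2) hPa)

theorem of_forall_not_endMem (hx : EndMem e K x) (hL : ∀ y ∈ L, ¬ EndMem e K y) :
    EndMem e L x := by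
  classical
  obtain ⟨z, hz⟩ := exists_endMem e (K ∪ L)
  exact (hz.mono Finset.subset_union_left).induction hx (hz.mono Finset.subset_union_right)
    fun a b hab _ hb ha => ha.of_adj hab fun hbL => hL b hbL hb

theorem reachable_deleteEdges (hx : EndMem e K x) (hy : EndMem e K y) (hK : v ∈ K ∨ w ∈ K) :
    (G.deleteEdges {s(v, w)}).Reachable x y := by
  refine hx.induction hy (Reachable.refl x) fun a b hab ha hb hxa => hxa.trans (Adj.reachable ?_)
  have := ha.notMem
  have := hb.notMem
  rw [deleteEdges_adj]
  grind

theorem not_endMem_of_adj (hG : G.IsAcyclic) (hvw : G.Adj v w) (hw : EndMem e {v} w) :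
    ¬ EndMem e {w} v := by
  classical
  intro hv
  obtain ⟨z, hz⟩ := exists_endMem e {v, w}
  have hwz : (G.deleteEdges {s(v, w)}).Reachable w z :=
    hw.reachable_deleteEdges (hz.mono (by simp)) (by simp)
  have hzv : (G.deleteEdges {s(v, w)}).Reachable z v :=
    (hz.mono (by simp)).reachable_deleteEdges hv (by simp)
  exact isBridge_iff.mp (isAcyclic_iff_forall_adj_isBridge.mp hG hvw) (hwz.trans hzv).symm

theorem exists_adj (hG : G.Preconnected) (e : G.end) (v : V) : ∃ w, G.Adj v w ∧ EndMem e {v} w := by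
  obtain ⟨⟨w, u⟩, hw, hu, hwu⟩ := ComponentCompl.exists_adj_boundary_pair hG
    (K := (({v} : Finset V) : Set V)) ⟨v, by simp⟩ (e.val (op {v}))
  obtain rfl : u = v := by simpa using hu
  exact ⟨w, hwu.symm, hw⟩

theorem singleton_or_singleton (hG : G.Preconnected) (e : G.end) (hvw : v ≠ w) :
    EndMem e {v} w ∨ EndMem e {w} v := by
  refine or_iff_not_imp_left.mpr fun hw => ?_
  obtain ⟨u, hvu, hu⟩ := exists_adj hG e v
  exact (hu.of_forall_not_endMem (by simpa using hw)).of_adj hvu.symm (by simpa using hvw)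

theorem eq_of_adj (hG : G.IsTree) (hv : G.Adj v x) (hw : G.Adj v y) (hx : EndMem e {v} x)
    (hy : EndMem e {v} y) : x = y := by
  by_contra hxy
  rcases singleton_or_singleton hG.connected.preconnected e hxy with h | h
  · exact hx.not_endMem_of_adj hG.isAcyclic hv (h.of_adj hw.symm (by simpa using hv.ne))
  · exact hy.not_endMem_of_adj hG.isAcyclic hw (h.of_adj hv.symm (by simpa using hw.ne))

theorem end_ext (h : ∀ K, ∃ x, EndMem e K x ∧ EndMem e' K x) : e = e' :=
  Subtype.ext <| funext fun K => let ⟨_, hx, hx'⟩ := h K.unop; hx.val_eq hx'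

end EndMem

theorem isIsolatedEnd_iff {V : Type} {G : SimpleGraph V} {e : G.end} :
    IsIsolatedEnd G e ↔
      ∃ K : Finset V, ∀ e' : G.end, e'.val (op K) = e.val (op K) → e' = e := by
  classical
  have hnhds : @nhds _ (endTop G) e =
      ⨅ K : (Finset V)ᵒᵖ, 𝓟 {e' : G.end | e'.val K = e.val K} := by
    rw [endTop, @nhds_induced _ _ (_), nhds_iInf, comap_iInf]
    refine iInf_congr fun K => ?_
    rw [@nhds_induced _ _ (_), @nhds_discrete _ ⊥ (discreteTopology_bot _), comap_pure,
      comap_principal]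
    rfl
  have hdir : Directed (· ≥ ·) fun K : (Finset V)ᵒᵖ => 𝓟 {e' : G.end | e'.val K = e.val K} := by
    intro K L
    refine ⟨op (K.unop ∪ L.unop), ?_, ?_⟩ <;> refine principal_mono.mpr fun e' he' => ?_ <;>
      obtain ⟨x, hx⟩ := EndMem.exists_endMem e' (K.unop ∪ L.unop)
    · exact (hx.mono Finset.subset_union_left).val_eq
        ((hx.of_val_eq he').mono Finset.subset_union_left)
    · exact (hx.mono Finset.subset_union_right).val_eq
        ((hx.of_val_eq he').mono Finset.subset_union_right)
  rw [IsIsolatedEnd, @isOpen_iff_mem_nhds _ (endTop G)]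
  simp only [Set.mem_singleton_iff, forall_eq, hnhds, mem_iInf_of_directed hdir, mem_principal,
    Set.subset_singleton_iff, Set.mem_ofPred_eq, Opposite.op_surjective.exists]

section Ray

variable {V : Type*} {G : SimpleGraph V} {f : ℕ → V}

theorem componentComplMk_eq_of_ray (hadj : ∀ n, G.Adj (f n) (f (n + 1))) {K : Set V} {N m : ℕ}
    (hN : ∀ n, N ≤ n → f n ∉ K) (hm : N ≤ m) :
    G.componentComplMk (hN m hm) = G.componentComplMk (hN N le_rfl) := by
  induction m, hm using Nat.le_induction with
  | base => rfl
  | succ m hm ih => exact (componentComplMk_eq_of_adj G _ _ (hadj m)).symm.trans ih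

theorem exists_end_of_ray (hf : Injective f) (hadj : ∀ n, G.Adj (f n) (f (n + 1))) :
    ∃ e : G.end, ∀ K, ∀ᶠ n in atTop, EndMem e K (f n) := by
  have hleaves (K : Finset V) : ∃ N, ∀ n, N ≤ n → f n ∉ K :=
    eventually_atTop.mp <| Nat.cofinite_eq_atTop ▸
      hf.tendsto_cofinite.eventually K.eventually_cofinite_notMem
  choose N hN using hleaves
  refine ⟨⟨fun K => G.componentComplMk (K := (K.unop : Set V)) (hN K.unop _ le_rfl), ?_⟩,
    fun K => eventually_atTop.mpr ⟨N K, fun n hn =>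
      ⟨hN K n hn, componentComplMk_eq_of_ray hadj (hN K) hn⟩⟩⟩
  intro L K g
  have hL : ∀ n, N L.unop ≤ n → f n ∉ (K.unop : Set V) := fun n hn hK =>
    hN L.unop n hn (CategoryTheory.le_of_op_hom g hK)
  exact (componentComplMk_eq_of_ray hadj hL (le_max_left _ (N K.unop))).symm.trans
    (componentComplMk_eq_of_ray hadj (hN K.unop) (le_max_right (N L.unop) _))

end Ray

section BackwardOrbit

variable {V : Type*} {p : V → V} {f : ℕ → V}

theorem exists_backward_orbit (hsurj : Surjective p) (v : V) :
    ∃ f : ℕ → V, f 0 = v ∧ ∀ n, p (f (n + 1)) = f n :=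
  ⟨fun n => (surjInv hsurj)^[n] v, rfl, fun n => by simp only [iterate_succ_apply', surjInv_eq]⟩

theorem iterate_backward_orbit (hf : ∀ n, p (f (n + 1)) = f n) (n : ℕ) : p^[n] (f n) = f 0 := by
  induction n with
  | zero => rfl
  | succ n ih => rw [iterate_succ_apply, hf, ih]

end BackwardOrbit

/-- `p` is a parent function on `G`: it orients every edge from a vertex `v` to `p v`, so that each
vertex has exactly one outgoing edge. The descendants of `v` are the `x` with `p^[n] x = v`. -/
structure IsParent {V : Type*} (G : SimpleGraph V) (p : V → V) : Prop where
  adj_iff : ∀ {v w}, G.Adj v w ↔ p v = w ∨ p w = v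
  ne : ∀ v, p (p v) ≠ v

theorem exists_isParent {V : Type*} {G : SimpleGraph V} (hG : G.IsTree) (e : G.end) :
    ∃ p : V → V, IsParent G p ∧ ∀ v, EndMem e {v} (p v) := by
  choose p hadj hmem using EndMem.exists_adj hG.connected.preconnected e
  refine ⟨p, ⟨fun {v w} => ⟨fun hvw => ?_, ?_⟩, fun v hv => ?_⟩, hmem⟩
  · refine (EndMem.singleton_or_singleton hG.connected.preconnected e hvw.ne).imp ?_ ?_
    · exact (hmem v).eq_of_adj hG (hadj v) hvw
    · exact (hmem w).eq_of_adj hG (hadj w) hvw.symm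
  · rintro (rfl | rfl)
    exacts [hadj v, (hadj w).symm]
  · exact (hmem v).not_endMem_of_adj hG.isAcyclic (hadj v) (by simpa [hv] using hmem (p v))

namespace IsParent

section Ancestry

variable {V : Type*} {G : SimpleGraph V} {p : V → V} {e e' : G.end} {v w x y : V} {m n : ℕ}

theorem adj (hp : IsParent G p) (v : V) : G.Adj v (p v) :=
  hp.adj_iff.mpr (.inl rfl)

theorem neighborSet_eq (hp : IsParent G p) (v : V) :
    G.neighborSet v = insert (p v) (p ⁻¹' {v}) := by
  ext w
  simp [hp.adj_iff, eq_comm]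

theorem finite_preimage (hp : IsParent G p) (hfin : ∀ v, (G.neighborSet v).Finite) (v : V) :
    (p ⁻¹' {v}).Finite :=
  (hfin v).subset (hp.neighborSet_eq v ▸ Set.subset_insert _ _)

theorem surjective (hp : IsParent G p) (hG : ∀ v, (G.neighborSet v).ncard ≠ 1) : Surjective p := by
  intro v
  by_contra! hv
  refine hG v (Set.ncard_eq_one.mpr ⟨p v, ?_⟩)
  rw [hp.neighborSet_eq, Set.preimage_singleton_eq_empty.mpr (by simpa using hv),
    insert_empty_eq]

theorem exists_walk (hp : IsParent G p) (v : V) (n : ℕ) :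
    ∃ q : G.Walk v (p^[n] v), q.edges = (List.range n).map fun i => s(p^[i] v, p^[i + 1] v) := by
  induction n generalizing v with
  | zero => exact ⟨.nil, rfl⟩
  | succ n ih =>
    obtain ⟨q, hq⟩ := ih (p v)
    exact ⟨.cons (hp.adj v) q, by simp [hq, List.range_succ_eq_map]⟩

theorem iterate_ne (hp : IsParent G p) (hG : G.IsAcyclic) (v : V) (hn : n ≠ 0) : p^[n] v ≠ v := by
  intro hv
  obtain ⟨q, hq⟩ := hp.exists_walk v n
  have hpath : q.IsPath := by
    rw [hG.isPath_iff_isChain, hq, List.isChain_map]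
    refine List.isChain_range _ _ |>.mpr fun i _ => ?_
    have := hp.ne (p^[i] v)
    have := (hp.adj (p^[i] v)).ne
    simp only [iterate_succ_apply']
    grind
  generalize p^[n] v = u at hv q
  subst hv
  rw [(Walk.isPath_iff_nil.mp hpath).eq_nil, Walk.edges_nil, eq_comm, List.map_eq_nil_iff,
    List.range_eq_nil] at hq
  exact hn hq

theorem eq_of_iterate_eq (hp : IsParent G p) (hG : G.IsAcyclic) (h : p^[m] v = p^[n] v) :
    m = n := by
  wlog hmn : m ≤ n generalizing m n
  · exact (this h.symm (by omega)).symm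
  obtain ⟨k, rfl⟩ := Nat.exists_eq_add_of_le' hmn
  rw [iterate_add_apply] at h
  by_contra hne
  exact hp.iterate_ne hG (p^[m] v) (by omega : k ≠ 0) h.symm

theorem eq_of_common_descendant (hp : IsParent G p) (hG : G.IsAcyclic) (hvw : p v = p w)
    (hv : p^[m] x = v) (hw : p^[n] x = w) : v = w := by
  subst hv hw
  have hmn : p^[m + 1] x = p^[n + 1] x := by simpa only [iterate_succ_apply'] using hvw
  rw [Nat.succ_injective (hp.eq_of_iterate_eq hG hmn)]

theorem exists_iterate_eq_iterate (hp : IsParent G p) (hG : G.Preconnected) (v w : V) :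
    ∃ m n, p^[m] v = p^[n] w := by
  obtain ⟨q⟩ := hG v w
  induction q with
  | nil => exact ⟨0, 0, rfl⟩
  | @cons u v' w huv _ ih =>
    obtain ⟨m, n, hmn⟩ := ih
    rcases hp.adj_iff.mp huv with rfl | rfl
    · exact ⟨m + 1, n, hmn⟩
    · exact ⟨m, n + 1, by rw [← iterate_succ_apply, iterate_succ_apply', hmn, iterate_succ_apply']⟩

theorem exists_common_ancestor (hp : IsParent G p) (hG : G.Connected) (K : Finset V) :
    ∃ v, ∀ x ∈ K, ∃ n, p^[n] x = v := by
  classical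
  induction K using Finset.induction with
  | empty => exact hG.nonempty.elim fun v => ⟨v, by simp⟩
  | insert a K _ ih =>
    obtain ⟨v, hv⟩ := ih
    obtain ⟨m, n, hmn⟩ := hp.exists_iterate_eq_iterate hG.preconnected a v
    refine ⟨p^[n] v, (Finset.forall_mem_insert ..).mpr ⟨⟨m, hmn⟩, fun x hx => ?_⟩⟩
    obtain ⟨k, rfl⟩ := hv x hx
    exact ⟨n + k, iterate_add_apply ..⟩

theorem exists_iterate_eq_of_endMem (hp : IsParent G p) (hx : EndMem e {v} x) (hy : EndMem e {v} y)
    (h : ∃ n, p^[n] x = v) : ∃ n, p^[n] y = v := by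
  refine hx.induction hy h fun a b hab ha _ hav => ?_
  obtain ⟨n, hn⟩ := hav
  rcases hp.adj_iff.mp hab with rfl | rfl
  · cases n with
    | zero => exact absurd (Finset.mem_singleton.mpr hn) ha.notMem
    | succ n => exact ⟨n, hn⟩
  · exact ⟨n + 1, hn⟩

theorem not_endMem_of_iterate_eq (hp : IsParent G p) (hG : G.IsAcyclic)
    (he : ∀ v, EndMem e {v} (p v)) (hx : p^[n] x = v) : ¬ EndMem e {v} x := by
  intro hxe
  obtain ⟨k, hk⟩ := hp.exists_iterate_eq_of_endMem hxe (he v) ⟨n, hx⟩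
  exact hp.iterate_ne hG v k.succ_ne_zero hk

theorem endMem_iterate_succ (hp : IsParent G p) (hG : G.IsTree) (he : ∀ v, EndMem e {v} (p v))
    (v : V) (n : ℕ) : EndMem e {v} (p^[n + 1] v) :=
  (EndMem.singleton_or_singleton hG.connected.preconnected e
    (hp.iterate_ne hG.isAcyclic v n.succ_ne_zero).symm).resolve_right
      (hp.not_endMem_of_iterate_eq hG.isAcyclic he rfl)

end Ancestry

section Rays

variable {V : Type*} {G : SimpleGraph V} {p : V → V} {e : G.end} {f : ℕ → V}

theorem exists_end_of_backward_orbit (hp : IsParent G p) (hG : G.IsAcyclic)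
    (he : ∀ v, EndMem e {v} (p v)) (hf : ∀ n, p (f (n + 1)) = f n) :
    ∃ e' ≠ e, ∀ K, ∀ᶠ n in atTop, EndMem e' K (f n) := by
  have hinj : Injective f := fun m n hmn => by
    have hm := iterate_backward_orbit hf m
    rw [hmn, ← iterate_backward_orbit hf n] at hm
    exact hp.eq_of_iterate_eq hG hm
  obtain ⟨e', he'⟩ := exists_end_of_ray hinj fun n => hp.adj_iff.mpr (.inr (hf n))
  refine ⟨e', ?_, he'⟩
  rintro rfl
  obtain ⟨n, hn⟩ := (he' {f 0}).exists
  exact hp.not_endMem_of_iterate_eq hG he (iterate_backward_orbit hf n) hn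

end Rays

section IsolatedEnds

variable {V : Type} {G : SimpleGraph V} {p : V → V} {e : G.end}

theorem exists_unbranched_of_isIsolatedEnd (hp : IsParent G p) (hG : G.IsTree)
    (he : ∀ v, EndMem e {v} (p v)) (hsurj : Surjective p) (hiso : IsIsolatedEnd G e) :
    ∃ t, ∀ n c, p c = p^[n + 1] t → c = p^[n] t := by
  obtain ⟨K, hK⟩ := isIsolatedEnd_iff.mp hiso
  obtain ⟨t, ht⟩ := hp.exists_common_ancestor hG.connected K
  refine ⟨t, fun n c hc => ?_⟩
  by_contra hne
  obtain ⟨f, rfl, hf⟩ := exists_backward_orbit hsurj c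
  obtain ⟨e', hne', he'⟩ := hp.exists_end_of_backward_orbit hG.isAcyclic he hf
  have hfK (m : ℕ) : f m ∉ K := fun hm => by
    obtain ⟨k, hk⟩ := ht _ hm
    rw [iterate_succ_apply'] at hc
    exact hne (hp.eq_of_common_descendant hG.isAcyclic hc (iterate_backward_orbit hf m)
      (by rw [iterate_add_apply, hk] : p^[n + k] (f m) = p^[n] t))
  have htop : EndMem e K (p^[n + 1] t) :=
    (hp.endMem_iterate_succ hG he t n).of_forall_not_endMem fun x hx hxe =>
      (ht x hx).elim fun _ hk => hp.not_endMem_of_iterate_eq hG.isAcyclic he hk hxe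
  have hfe (m : ℕ) : EndMem e K (f m) := by
    induction m with
    | zero => exact htop.of_adj (hp.adj_iff.mpr (.inr hc)) (hfK 0)
    | succ m ih => exact ih.of_adj (hp.adj_iff.mpr (.inr (hf m))) (hfK _)
  obtain ⟨m, hm⟩ := (he' K).exists
  exact hne' (hK e' (hm.val_eq (hfe m)))

theorem exists_branching_descendant (hp : IsParent G p) (hG : G.IsAcyclic)
    (he : ∀ v, EndMem e {v} (p v)) (hsurj : Surjective p)
    (huniq : ∀ e' : G.end, IsIsolatedEnd G e' → e' = e) (v : V) :
    ∃ n a b, a ≠ b ∧ p a = p b ∧ p^[n] (p a) = v := by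
  classical
  by_contra! hunb
  obtain ⟨f, rfl, hf⟩ := exists_backward_orbit hsurj v
  have heq : ∀ n x, p^[n] x = f 0 → x = f n := by
    intro n
    induction n with
    | zero => exact fun _ => id
    | succ n ih =>
      intro x hx
      by_contra hne
      exact hunb n x _ hne ((ih _ hx).trans (hf n).symm) hx
  obtain ⟨e', hne', he'⟩ := hp.exists_end_of_backward_orbit hG he hf
  refine hne' (huniq e' (isIsolatedEnd_iff.mpr ⟨{f 0}, fun e'' he'' => ?_⟩))
  refine EndMem.end_ext fun K => ?_
  obtain ⟨N, hN⟩ := eventually_atTop.mp (he' K)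
  obtain ⟨z, hz⟩ := EndMem.exists_endMem e'' (insert (f 0) (K ∪ (Finset.range N).image f))
  obtain ⟨m, hm⟩ := (he' {f 0}).exists
  obtain ⟨n, hn⟩ := hp.exists_iterate_eq_of_endMem (hm.of_val_eq he''.symm)
    (hz.mono (by simp)) ⟨m, iterate_backward_orbit hf m⟩
  obtain rfl := heq n z hn
  have hNn : N ≤ n := by
    by_contra! hlt
    exact hz.notMem (by simp only [Finset.mem_insert, Finset.mem_union, Finset.mem_image]; grind)
  exact ⟨f n, hz.mono (by grind), hN n hNn⟩

end IsolatedEnds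

end IsParent

section Generation

variable {V : Type*} {p : V → V} (hfin : ∀ v, (p ⁻¹' {v}).Finite)

open Classical in
/-- The `n`-th generation of descendants of `v`, the fibre of `p^[n]` over `v`, for a function `p`
with finite fibres. The recursion is the one along which sums over descendants are computed. -/
noncomputable def generation : ℕ → V → Finset V
  | 0, v => {v}
  | n + 1, v => (generation n v).biUnion fun x => (hfin x).toFinset

theorem mem_generation {n : ℕ} {v x : V} : x ∈ generation hfin n v ↔ p^[n] x = v := by
  induction n generalizing x with
  | zero => simp [generation]
  | succ n ih => simp [generation, ih]

theorem sum_generation_succ {M : Type*} [AddCommMonoid M] (f : V → M) (n : ℕ) (v : V) :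
    ∑ x ∈ generation hfin (n + 1) v, f x =
      ∑ x ∈ generation hfin n v, ∑ c ∈ (hfin x).toFinset, f c := by
  classical
  refine Finset.sum_biUnion fun a _ b _ hab => Finset.disjoint_left.mpr fun c ha hb => hab ?_
  rw [Set.Finite.mem_toFinset] at ha hb
  exact ha.symm.trans hb

theorem exists_card_generation_lt (hsurj : Surjective p)
    (hbranch : ∀ v, ∃ n a b, a ≠ b ∧ p a = p b ∧ p^[n] (p a) = v) (n : ℕ) (v : V) :
    ∃ m, (generation hfin n v).card < (generation hfin m v).card := by
  classical
  obtain ⟨u, hu⟩ := hsurj.iterate n v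
  obtain ⟨k, a, b, hne, hab, ha⟩ := hbranch u
  have himage : (generation hfin (n + (k + 1)) v).image p^[k + 1] = generation hfin n v := by
    ext x
    simp only [Finset.mem_image, mem_generation, iterate_add_apply p n]
    refine ⟨?_, fun hx => ?_⟩
    · rintro ⟨y, hy, rfl⟩
      exact hy
    · obtain ⟨y, rfl⟩ := hsurj.iterate (k + 1) x
      exact ⟨y, hx, rfl⟩
  refine ⟨n + (k + 1), himage ▸ Finset.card_image_le.lt_of_ne fun hcard => hne ?_⟩
  refine Finset.injOn_of_card_image_eq hcard ?_ ?_ ?_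
  all_goals simp [mem_generation, iterate_add_apply p n, iterate_succ_apply, ← hab, ha, hu]

theorem exists_lt_card_generation (hsurj : Surjective p)
    (hbranch : ∀ v, ∃ n a b, a ≠ b ∧ p a = p b ∧ p^[n] (p a) = v) (v : V) (B : ℕ) :
    ∃ n, B < (generation hfin n v).card := by
  induction B with
  | zero => exact ⟨0, by simp [generation]⟩
  | succ B ih =>
    obtain ⟨n, hn⟩ := ih
    obtain ⟨m, hm⟩ := exists_card_generation_lt hfin hsurj hbranch n v
    exact ⟨m, by omega⟩

end Generation

namespace TreeDyn

variable {V : Type} {T : TreeDyn V} {p : V → V} {dV dV' : V → ℕ} {dE dE' : V → V → ℕ}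
  {t v w x y : V}

namespace IsLocalDeg

theorem edge_comm (hd : T.IsLocalDeg dV dE) (v w : V) : dE v w = dE w v :=
  hd.1 v w

theorem vertex_pos (hd : T.IsLocalDeg dV dE) (v : V) : 0 < dV v :=
  hd.2.1 v

theorem finsum_edge_sub_one_add_two_le (hd : T.IsLocalDeg dV dE) (v : V) :
    (∑ᶠ w ∈ T.G.neighborSet v, (dE v w - 1)) + 2 ≤ 2 * dV v :=
  hd.2.2.2.1 v

theorem vertex_eq_sum [DecidableRel T.G.Adj] (hd : T.IsLocalDeg dV dE)
    (hw : T.G.Adj (T.F x) w) :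
    dV x = ∑ y ∈ (T.finFibers w).toFinset with T.G.Adj x y, dE x y := by
  obtain ⟨y, hxy, rfl⟩ := T.edgeSurj hw
  rw [hd.2.2.2.2 hxy, ← finsum_mem_coe_finset]
  exact finsum_mem_congr (by ext z; simp [and_comm]) fun _ _ => rfl

theorem sum_fiber_eq_of_adj (hd : T.IsLocalDeg dV dE) (hvw : T.G.Adj v w) :
    ∑ x ∈ (T.finFibers v).toFinset, dV x = ∑ y ∈ (T.finFibers w).toFinset, dV y := by
  classical
  calc ∑ x ∈ (T.finFibers v).toFinset, dV x
    _ = ∑ x ∈ (T.finFibers v).toFinset,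
          ∑ y ∈ (T.finFibers w).toFinset with T.G.Adj x y, dE x y :=
      Finset.sum_congr rfl fun x hx => hd.vertex_eq_sum <| by
        rwa [(T.finFibers v).mem_toFinset.mp hx]
    _ = ∑ y ∈ (T.finFibers w).toFinset,
          ∑ x ∈ (T.finFibers v).toFinset with T.G.Adj y x, dE x y :=
      Finset.sum_comm' fun x y => by simp only [Finset.mem_filter, T.G.adj_comm x y]; tauto
    _ = ∑ y ∈ (T.finFibers w).toFinset, dV y :=
      Finset.sum_congr rfl fun y hy => by
        simp only [hd.edge_comm _ y]
        refine (hd.vertex_eq_sum ?_).symm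
        rw [(T.finFibers w).mem_toFinset.mp hy]
        exact hvw.symm

theorem sum_fiber_eq (hd : T.IsLocalDeg dV dE) (v w : V) :
    ∑ x ∈ (T.finFibers v).toFinset, dV x = ∑ y ∈ (T.finFibers w).toFinset, dV y := by
  obtain ⟨q⟩ := T.isTree.connected.preconnected v w
  induction q with
  | nil => rfl
  | cons h _ ih => exact (hd.sum_fiber_eq_of_adj h).trans ih

theorem exists_card_le_of_map_eq (hd : T.IsLocalDeg dV dE) :
    ∃ D, ∀ (s : Finset V) (v : V), (∀ x ∈ s, T.F x = v) → s.card ≤ D := by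
  obtain ⟨u⟩ := T.isTree.connected.nonempty
  refine ⟨∑ x ∈ (T.finFibers u).toFinset, dV x, fun s v hs => ?_⟩
  calc s.card
    _ ≤ (T.finFibers v).toFinset.card :=
      Finset.card_le_card fun x hx => (T.finFibers v).mem_toFinset.mpr (hs x hx)
    _ ≤ ∑ x ∈ (T.finFibers v).toFinset, dV x := by
      rw [Finset.card_eq_sum_ones]
      exact Finset.sum_le_sum fun x _ => hd.vertex_pos x
    _ = ∑ x ∈ (T.finFibers u).toFinset, dV x := hd.sum_fiber_eq v u

end IsLocalDeg

section Orientation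

theorem exists_child_map_eq (hp : IsParent T.G p) (hw : T.G.Adj (T.F x) w)
    (hne : T.F (p x) ≠ w) : ∃ c, p c = x ∧ T.F c = w := by
  obtain ⟨c, hxc, rfl⟩ := T.edgeSurj hw
  refine ⟨c, (hp.adj_iff.mp hxc).resolve_left ?_, rfl⟩
  rintro rfl
  exact hne rfl

theorem exists_descendant_map_eq_iterate (hp : IsParent T.G p) (hy : T.F y = p (T.F (p y)))
    (n : ℕ) : ∃ w, p^[n] w = y ∧ T.F w = p^[n] (T.F y) := by
  induction n generalizing y with
  | zero => exact ⟨y, rfl, rfl⟩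
  | succ n ih =>
    obtain ⟨c, rfl, hc⟩ := exists_child_map_eq hp (hp.adj (T.F y)) fun h =>
      hp.ne (T.F y) (by rw [← h, ← hy])
    obtain ⟨w, rfl, hw⟩ := ih hc
    exact ⟨w, iterate_succ_apply' .., by rw [hw, hc, iterate_succ_apply]⟩

theorem exists_descendant_map_eq (hp : IsParent T.G p) {m : ℕ} (hx : T.F x = p^[m] t)
    (hpx : T.F (p x) = p^[m + 1] t) : ∃ k z, p^[k] z = x ∧ T.F z = t := by
  induction m generalizing x with
  | zero => exact ⟨0, x, rfl, hx⟩
  | succ m ih =>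
    rw [iterate_succ_apply'] at hx
    obtain ⟨c, rfl, hc⟩ := exists_child_map_eq (w := p^[m] t) hp (hx ▸ (hp.adj _).symm) <| by
      simpa only [hpx, iterate_succ_apply'] using hp.ne (p^[m] t)
    obtain ⟨k, z, rfl, hz⟩ := ih hc (by rw [hx, iterate_succ_apply'])
    exact ⟨k + 1, z, iterate_succ_apply' .., hz⟩

theorem exists_forall_le_of_map_eq (hp : IsParent T.G p) (t y : V) :
    ∃ M, ∀ n z, p^[n] z = y → T.F z = t → n ≤ M := by
  have hfin : {n | ∃ z, p^[n] z = y ∧ T.F z = t}.Finite := by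
    refine ((T.finFibers t).biUnion (t := fun z => {n | p^[n] z = y}) fun z _ =>
      Set.Subsingleton.finite fun m hm n hn => ?_).subset ?_
    · exact hp.eq_of_iterate_eq T.isTree.isAcyclic (hm.trans hn.symm)
    · rintro n ⟨z, hn, hz⟩
      exact Set.mem_biUnion hz hn
  obtain ⟨M, hM⟩ := hfin.bddAbove
  exact ⟨M, fun n z hn hz => hM ⟨z, hn, hz⟩⟩

/- A descendant on which `T.F` followed the parent direction again would map to a vertex of the
unbranched ray above `t`, and the ray could be lifted down to a preimage of `t`. -/
theorem map_eq_iterate_of_forall_map_ne (hp : IsParent T.G p)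
    (ht : ∀ n c, p c = p^[n + 1] t → c = p^[n] t) {m : ℕ} (hw : T.F w = p^[m + 1] t)
    (hne : ∀ k z, p^[k] z = w → T.F z ≠ t) {n : ℕ} (hx : p^[n] x = w) :
    T.F x = p^[n] (T.F w) := by
  induction n generalizing x with
  | zero => rw [← hx, iterate_zero_apply, iterate_zero_apply]
  | succ n ih =>
    have hpx : T.F (p x) = p^[n] (T.F w) := ih hx
    rcases hp.adj_iff.mp (T.adjMap (hp.adj x)) with h | h
    · rw [hpx, hw, ← iterate_add_apply] at h
      obtain ⟨k, z, rfl, hz⟩ := exists_descendant_map_eq hp (ht (n + m) _ h) <| by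
        rw [hpx, hw, ← iterate_add_apply, add_assoc]
      exact absurd hz (hne (n + 1 + k) z (by rw [iterate_add_apply, hx]))
    · rw [← h, hpx, iterate_succ_apply']

theorem IsLocalDeg.commute_parent (hd : T.IsLocalDeg dV dE) (hp : IsParent T.G p)
    (hfin : ∀ v, (p ⁻¹' {v}).Finite) (ht : ∀ n c, p c = p^[n + 1] t → c = p^[n] t)
    (hgrow : ∀ v B, ∃ n, B < (generation hfin n v).card) : Function.Commute T.F p := by
  intro y
  by_contra hy
  have hrev : T.F y = p (T.F (p y)) :=
    ((hp.adj_iff.mp (T.adjMap (hp.adj y))).resolve_left (Ne.symm hy)).symm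
  obtain ⟨i, j, hij⟩ := hp.exists_iterate_eq_iterate T.isTree.connected.preconnected (T.F y) t
  obtain ⟨M, hM⟩ := exists_forall_le_of_map_eq hp t y
  obtain ⟨w, hwy, hw⟩ := exists_descendant_map_eq_iterate hp hrev (M + 1 + i)
  have hwt : T.F w = p^[M + j + 1] t := by
    rw [hw, iterate_add_apply, hij, ← iterate_add_apply, add_right_comm]
  have hne (k : ℕ) (z : V) (hz : p^[k] z = w) : T.F z ≠ t := fun hzt => by
    have := hM (M + 1 + i + k) z (by rw [iterate_add_apply, hz, hwy]) hzt
    omega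
  obtain ⟨D, hD⟩ := hd.exists_card_le_of_map_eq
  obtain ⟨n, hn⟩ := hgrow w D
  refine hn.not_ge (hD _ (p^[n] (T.F w)) fun x hx => ?_)
  exact map_eq_iterate_of_forall_map_ne hp ht hwt hne ((mem_generation hfin).mp hx)

end Orientation

namespace IsLocalDeg

section Commute

variable (hd : T.IsLocalDeg dV dE) (hp : IsParent T.G p) (hF : Function.Commute T.F p)

include hd hp hF

theorem edge_parent (v : V) : dE v (p v) = dV v := by
  classical
  rw [hd.vertex_eq_sum (hp.adj (T.F v))]
  refine (Finset.sum_eq_single_of_mem (p v) ?_ fun c hc hne => ?_).symm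
  · simpa using ⟨hF v, hp.adj v⟩
  · simp only [Finset.mem_filter, Set.Finite.mem_toFinset, Set.mem_ofPred_eq] at hc
    obtain rfl := (hp.adj_iff.mp hc.2).resolve_left hne.symm
    rw [hF] at hc
    exact absurd hc.1.symm (hp.ne _)

variable (hfin : ∀ v, (p ⁻¹' {v}).Finite)

theorem vertex_eq_sum_children [DecidableEq V] (hy : p y = T.F v) :
    dV v = ∑ c ∈ (hfin v).toFinset with T.F c = y, dV c := by
  classical
  rw [hd.vertex_eq_sum (hp.adj_iff.mpr (.inr hy))]
  refine Finset.sum_congr ?_ fun c hc => ?_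
  · ext c
    have hne : p v = c → T.F c ≠ y := by
      rintro rfl rfl
      exact hp.ne (T.F v) (by rw [← hF, hy])
    simp only [Finset.mem_filter, Set.Finite.mem_toFinset, Set.mem_ofPred_eq, Set.mem_preimage,
      Set.mem_singleton_iff, hp.adj_iff]
    tauto
  · obtain rfl : p c = v := by simpa using (Finset.mem_filter.mp hc).1
    rw [hd.edge_comm, hd.edge_parent hp hF]

theorem sum_children (v : V) (g : V → ℕ) :
    ∑ c ∈ (hfin v).toFinset, dV c * g (T.F c) =
      dV v * ∑ y ∈ (hfin (T.F v)).toFinset, g y := by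
  classical
  have hmaps : ∀ c ∈ (hfin v).toFinset, T.F c ∈ (hfin (T.F v)).toFinset := by
    simp only [Set.Finite.mem_toFinset, Set.mem_preimage, Set.mem_singleton_iff]
    rintro c rfl
    exact (hF c).symm
  rw [← Finset.sum_fiberwise_of_maps_to hmaps, Finset.mul_sum]
  refine Finset.sum_congr rfl fun y hy => ?_
  rw [hd.vertex_eq_sum_children hp hF hfin (by simpa using hy), Finset.sum_mul]
  exact Finset.sum_congr rfl fun c hc => by rw [(Finset.mem_filter.mp hc).2]

theorem sum_generation (n : ℕ) (v : V) (g : V → ℕ) :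
    ∑ x ∈ generation hfin n v, dV x * g (T.F x) =
      dV v * ∑ y ∈ generation hfin n (T.F v), g y := by
  induction n generalizing g with
  | zero => simp [generation]
  | succ n ih =>
    rw [sum_generation_succ, sum_generation_succ, ← ih]
    exact Finset.sum_congr rfl fun x _ => hd.sum_children hp hF hfin x g

theorem sum_generation_eq_mul_card (n : ℕ) (v : V) :
    ∑ x ∈ generation hfin n v, dV x = dV v * (generation hfin n (T.F v)).card := by
  simpa using hd.sum_generation hp hF hfin n v fun _ => 1

theorem sum_children_sub_one_le (v : V) : ∑ c ∈ (hfin v).toFinset, (dV c - 1) ≤ dV v - 1 := by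
  have hRH := hd.finsum_edge_sub_one_add_two_le v
  have hsum : ∑ c ∈ (hfin v).toFinset, (dE v c - 1) = ∑ c ∈ (hfin v).toFinset, (dV c - 1) := by
    refine Finset.sum_congr rfl fun c hc => ?_
    obtain rfl : p c = v := by simpa using hc
    rw [hd.edge_comm, hd.edge_parent hp hF]
  rw [hp.neighborSet_eq, finsum_mem_insert _ (s := p ⁻¹' {v}) (hp.ne v) (hfin v),
    hd.edge_parent hp hF, finsum_mem_eq_finite_toFinset_sum _ (hfin v), hsum] at hRH
  omega

theorem sum_generation_sub_one_le (n : ℕ) (v : V) :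
    ∑ x ∈ generation hfin n v, (dV x - 1) ≤ dV v - 1 := by
  induction n with
  | zero => simp [generation]
  | succ n ih =>
    rw [sum_generation_succ]
    exact (Finset.sum_le_sum fun x _ => hd.sum_children_sub_one_le hp hF hfin x).trans ih

theorem card_generation_le (n : ℕ) (v : V) :
    (generation hfin n v).card ≤ dV v * (generation hfin n (T.F v)).card := by
  rw [← hd.sum_generation_eq_mul_card hp hF, Finset.card_eq_sum_ones]
  exact Finset.sum_le_sum fun x _ => hd.vertex_pos x

theorem mul_card_generation_lt (n : ℕ) (v : V) :
    dV v * (generation hfin n (T.F v)).card < dV v + (generation hfin n v).card := by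
  calc dV v * (generation hfin n (T.F v)).card
    _ = ∑ x ∈ generation hfin n v, (dV x - 1 + 1) := by
      rw [← hd.sum_generation_eq_mul_card hp hF]
      exact Finset.sum_congr rfl fun x _ => (Nat.sub_add_cancel (hd.vertex_pos x)).symm
    _ = ∑ x ∈ generation hfin n v, (dV x - 1) + (generation hfin n v).card := by
      rw [Finset.sum_add_distrib, Finset.card_eq_sum_ones]
    _ ≤ dV v - 1 + (generation hfin n v).card :=
      Nat.add_le_add_right (hd.sum_generation_sub_one_le hp hF hfin n v) _
    _ < dV v + (generation hfin n v).card :=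
      Nat.add_lt_add_right (Nat.sub_one_lt (hd.vertex_pos v).ne') _

theorem vertex_le (hd' : T.IsLocalDeg dV' dE')
    (hgrow : ∀ v B, ∃ n, B < (generation hfin n v).card) (v : V) : dV v ≤ dV' v := by
  by_contra! hlt
  obtain ⟨n, hn⟩ := hgrow (T.F v) (dV v)
  have hlower := hd.mul_card_generation_lt hp hF hfin n v
  have hupper := hd'.card_generation_le hp hF hfin n v
  refine lt_irrefl (dV v * (generation hfin n (T.F v)).card) ?_
  calc dV v * (generation hfin n (T.F v)).card
    _ < dV v + dV' v * (generation hfin n (T.F v)).card := by omega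
    _ < (dV' v + 1) * (generation hfin n (T.F v)).card := by rw [add_one_mul]; omega
    _ ≤ dV v * (generation hfin n (T.F v)).card := Nat.mul_le_mul_right _ hlt

end Commute

end IsLocalDeg

end TreeDyn

theorem local_degree_unique_general {V : Type} (T : TreeDyn V) (infty : T.G.end)
    (hiso : IsIsolatedEnd T.G infty) (huniq : ∀ e : T.G.end, IsIsolatedEnd T.G e → e = infty)
    (hval : ∀ v : V, (T.G.neighborSet v).ncard ≠ 1) (dV₁ dV₂ : V → ℕ) (dE₁ dE₂ : V → V → ℕ)
    (h₁ : T.IsLocalDeg dV₁ dE₁) (h₂ : T.IsLocalDeg dV₂ dE₂) :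
    (∀ v : V, dV₁ v = dV₂ v) ∧ (∀ v w : V, T.G.Adj v w → dE₁ v w = dE₂ v w) := by
  obtain ⟨p, hp, hmem⟩ := exists_isParent T.isTree infty
  have hfin := hp.finite_preimage T.locFin
  have hsurj := hp.surjective hval
  obtain ⟨t, ht⟩ := hp.exists_unbranched_of_isIsolatedEnd T.isTree hmem hsurj hiso
  have hgrow := exists_lt_card_generation hfin hsurj
    (hp.exists_branching_descendant T.isTree.isAcyclic hmem hsurj huniq)
  have hF : Function.Commute T.F p := h₁.commute_parent hp hfin ht hgrow
  have hV (v : V) : dV₁ v = dV₂ v := le_antisymm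
    (h₁.vertex_le hp hF hfin h₂ hgrow v) (h₂.vertex_le hp hF hfin h₁ hgrow v)
  have hE (v : V) : dE₁ v (p v) = dE₂ v (p v) := by
    rw [h₁.edge_parent hp hF, h₂.edge_parent hp hF, hV]
  refine ⟨hV, fun v w hvw => ?_⟩
  rcases hp.adj_iff.mp hvw with rfl | rfl
  · exact hE v
  · rw [h₁.edge_comm, h₂.edge_comm, hE]

/-- **Uniqueness of the local degree function.**
If `F : T → T` is a polynomial-like branched covering of a simplicial tree,
then its local degree function is unique: two local degree functions agree on
all vertices and on all edges. -/
theorem local_degree_unique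
    {V : Type} (T : TreeDyn V) (infty : T.G.end)
    (hpl : T.IsPolyLike infty)
    (dV₁ dV₂ : V → ℕ) (dE₁ dE₂ : V → V → ℕ)
    (h₁ : T.IsLocalDeg dV₁ dE₁) (h₂ : T.IsLocalDeg dV₂ dE₂) :
    (∀ v : V, dV₁ v = dV₂ v) ∧
    (∀ v w : V, T.G.Adj v w → dE₁ v w = dE₂ v w) := by
  obtain ⟨-, hiso, huniq, hval, -⟩ := hpl
  exact local_degree_unique_general T infty hiso huniq hval dV₁ dV₂ dE₁ dE₂ h₁ h₂
end

section
/- Let F : T → T be a polynomial-like branched covering of a simplicial tree. Then N(F) ≤ deg(F) − 1, where N(F) is the positive integer with h(F(v)) = h(v) + N(F) for all vertices v and deg(F) is the global degree. -/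
open SimpleGraph Function Opposite

/-! Every vertex `v` has a unique neighbour in the direction of `∞`, its parent, and `F` commutes
with taking parents because it shifts heights. Hence the edge from `v` to its parent has degree
`deg v`, and the multiplicity of `v` is `(deg v - 1) - ∑ (deg c - 1)` over the children `c` of
`v`. Summing, the critical points below the base have total multiplicity at most
`deg v₀ - 1 ≤ deg F - 1`.

On the other hand, all branch vertices have height at most `0` while `F` raises heights by `N`, so
every forward orbit of branch vertices has a last one. All children of this last branch vertex have
the same image, which makes it critical. Since every grand orbit meets the branch vertices, this
gives a critical point in each of the `N` residue classes of heights modulo `N`.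
-/

section Finset

variable {α M : Type*} [AddCommMonoid M] [PartialOrder M] [CanonicallyOrderedAdd M]

theorem single_le_finsum_mem {s : Set α} (hs : s.Finite) (f : α → M) {a : α} (ha : a ∈ s) :
    f a ≤ ∑ᶠ i ∈ s, f i := by
  rw [finsum_mem_eq_finite_toFinset_sum f hs]
  exact Finset.single_le_sum_of_canonicallyOrdered (hs.mem_toFinset.2 ha)

variable [IsOrderedAddMonoid M]

theorem sum_le_of_add_sum_children_le_of_lt {p : α → α} {C : α → Finset α} {g m : α → M}
    (hC : ∀ v, v ∈ C (p v)) (hm : ∀ v, g v + ∑ c ∈ C v, m c ≤ m v) (n : ℕ) (r : α)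
    (S : Finset α) (hS : ∀ w ∈ S, ∃ k < n, p^[k] w = r) : ∑ w ∈ S, g w ≤ m r := by
  classical
  induction n generalizing r S with
  | zero =>
    obtain rfl : S = ∅ := Finset.eq_empty_of_forall_notMem fun w hw => by simpa using hS w hw
    simp
  | succ n ih =>
    have hchild : ∀ w ∈ S.erase r, ∃ c ∈ C r, ∃ k < n, p^[k] w = c := by
      intro w hw
      obtain ⟨hne, hwS⟩ := Finset.mem_erase.1 hw
      obtain ⟨_ | k, hk, rfl⟩ := hS w hwS
      · exact absurd rfl hne
      · exact ⟨p^[k] w, iterate_succ_apply' p k w ▸ hC _, k, by omega, rfl⟩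
    choose! c hcmem hc using hchild
    calc ∑ w ∈ S, g w
        ≤ ∑ w ∈ insert r (S.erase r), g w :=
          Finset.sum_le_sum_of_subset (Finset.insert_erase_subset r S)
      _ = g r + ∑ b ∈ C r, ∑ w ∈ S.erase r with c w = b, g w := by
          rw [Finset.sum_insert (Finset.notMem_erase r S), Finset.sum_fiberwise_of_maps_to hcmem]
      _ ≤ g r + ∑ b ∈ C r, m b := by
          refine add_le_add_right (Finset.sum_le_sum fun b _ => ih b _ fun w hw => ?_) _
          obtain ⟨hwS, rfl⟩ := Finset.mem_filter.1 hw
          exact hc w hwS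
      _ ≤ m r := hm r

theorem sum_le_of_add_sum_children_le {p : α → α} {C : α → Finset α} {g m : α → M}
    (hC : ∀ v, v ∈ C (p v)) (hm : ∀ v, g v + ∑ c ∈ C v, m c ≤ m v) {r : α}
    {S : Finset α} (hS : ∀ w ∈ S, ∃ k, p^[k] w = r) : ∑ w ∈ S, g w ≤ m r := by
  choose! k hk using hS
  exact sum_le_of_add_sum_children_le_of_lt hC hm (S.sup k + 1) r S fun w hw =>
    ⟨k w, Nat.lt_succ_of_le (Finset.le_sup hw), hk w hw⟩

end Finset

section Graph

variable {V : Type*} {G : SimpleGraph V}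

theorem componentCompl_induction {K : Set V} {C : G.ComponentCompl K} {P : V → Prop} {x y : V}
    (hx : x ∈ C) (hy : y ∈ C) (hPx : P x)
    (step : ∀ ⦃a b⦄, a ∈ C → b ∈ C → G.Adj a b → P a → P b) : P y := by
  obtain ⟨hxK, rfl⟩ := hx
  obtain ⟨hyK, hxy⟩ := hy
  obtain ⟨p⟩ := (ConnectedComponent.exact hxy).symm
  suffices ∀ {a b : (Kᶜ : Set V)} (_ : (G.induce Kᶜ).Walk a b),
      (a : V) ∈ G.componentComplMk hxK → P a → P b from this p ⟨hxK, rfl⟩ hPx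
  intro a b q
  induction q with
  | nil => exact fun _ h => h
  | @cons a b _ hab _ ih =>
    intro ha hPa
    have hb := ComponentCompl.mem_of_adj (a : V) b ha b.2 hab
    exact ih hb (step ha hb hab hPa)

theorem exists_walk_of_mem_componentCompl {K : Set V} {C : G.ComponentCompl K} {x y : V}
    (hx : x ∈ C) (hy : y ∈ C) : ∃ p : G.Walk x y, ∀ z ∈ p.support, z ∉ K := by
  refine componentCompl_induction (P := fun y => ∃ p : G.Walk x y, ∀ z ∈ p.support, z ∉ K) hx hy
    ⟨Walk.nil, by simpa using ComponentCompl.notMem_of_mem hx⟩ ?_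
  rintro a b - hb hab ⟨p, hp⟩
  refine ⟨p.concat hab, fun z hz => ?_⟩
  rw [Walk.support_concat, List.mem_append, List.mem_singleton] at hz
  rcases hz with hz | rfl
  · exact hp z hz
  · exact ComponentCompl.notMem_of_mem hb

theorem mem_componentCompl_of_walk {K : Set V} {C : G.ComponentCompl K} {x y : V}
    (hx : x ∈ C) (p : G.Walk x y) (hp : ∀ z ∈ p.support, z ∉ K) : y ∈ C := by
  induction p with
  | nil => exact hx
  | cons h p ih =>
    simp only [Walk.support_cons, List.mem_cons, forall_eq_or_imp] at hp
    exact ih (ComponentCompl.mem_of_adj _ _ hx (hp.2 _ p.start_mem_support) h) hp.2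

theorem eq_of_adj_of_mem_componentCompl (hG : G.IsAcyclic) {v x y : V} {K : Set V} (hv : v ∈ K)
    {C : G.ComponentCompl K} (hx : x ∈ C) (hy : y ∈ C) (hvx : G.Adj v x) (hvy : G.Adj v y) :
    x = y := by
  obtain ⟨p, hp⟩ := exists_walk_of_mem_componentCompl hx hy
  have hbridge : s(v, y) ∈ (Walk.cons hvx p).edges :=
    isBridge_iff_forall_walk_mem_edges.1 (isAcyclic_iff_forall_adj_isBridge.1 hG hvy) _
  rw [Walk.edges_cons, List.mem_cons] at hbridge
  rcases hbridge with h | h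
  · exact (Sym2.congr_right.1 h).symm
  · exact absurd hv (hp v (p.fst_mem_support_of_mem_edges h))

section EndComponent

variable {e : G.end}

/-- The component of the complement of `K` that contains the end `e`. -/
def endComponent (e : G.end) (K : Finset V) : G.ComponentCompl (K : Set V) :=
  e.val (op K)

theorem endComponent_antitone {K L : Finset V} (hKL : K ⊆ L) {x : V}
    (hx : x ∈ endComponent e L) : x ∈ endComponent e K := by
  obtain ⟨hxL, he⟩ := hx
  exact ⟨_, (end_hom_mk_of_mk G e.property (CategoryTheory.opHomOfLE hKL) hxL he.symm).symm⟩

theorem notMem_endComponent_self {v : V} : v ∉ endComponent e {v} := fun h =>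
  ComponentCompl.notMem_of_mem h (by simp)

theorem mem_endComponent_of_adj {v x y : V} (hx : x ∈ endComponent e {v}) (hxy : G.Adj x y)
    (hy : y ≠ v) : y ∈ endComponent e {v} :=
  ComponentCompl.mem_of_adj x y hx (by simpa using hy) hxy

theorem exists_adj_mem_endComponent (hG : G.Preconnected) (e : G.end) (v : V) :
    ∃ w, G.Adj v w ∧ w ∈ endComponent e {v} := by
  obtain ⟨⟨w, u⟩, hw, hu, h⟩ :=
    ComponentCompl.exists_adj_boundary_pair hG (by simp) (endComponent e {v})
  obtain rfl : u = v := by simpa using hu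
  exact ⟨w, h.symm, hw⟩

theorem exists_mem_endComponent_and_adj_or (hG : G.Preconnected) (e : G.end) (v w : V) :
    ∃ x ∈ endComponent e {v}, x ∈ endComponent e {w} ∧ (G.Adj v x ∨ G.Adj w x) := by
  classical
  obtain ⟨⟨x, u⟩, hx, hu, h⟩ :=
    ComponentCompl.exists_adj_boundary_pair hG (by simp) (endComponent e {v, w})
  refine ⟨x, endComponent_antitone (by simp) hx, endComponent_antitone (by simp) hx, ?_⟩
  obtain rfl | rfl : u = v ∨ u = w := by simpa using hu
  · exact Or.inl h.symm
  · exact Or.inr h.symm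

end EndComponent

section EndParent

variable (hG : G.IsTree) (e : G.end)

/-- The neighbour of `v` in the direction of the end `e` of a tree. -/
noncomputable def endParent (v : V) : V :=
  (exists_adj_mem_endComponent hG.connected.preconnected e v).choose

theorem adj_endParent (v : V) : G.Adj v (endParent hG e v) :=
  (exists_adj_mem_endComponent hG.connected.preconnected e v).choose_spec.1

theorem endParent_mem_endComponent (v : V) : endParent hG e v ∈ endComponent e {v} :=
  (exists_adj_mem_endComponent hG.connected.preconnected e v).choose_spec.2

variable {e}

theorem endParent_eq_of_mem {v w : V} (h : G.Adj v w) (hw : w ∈ endComponent e {v}) :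
    endParent hG e v = w :=
  eq_of_adj_of_mem_componentCompl hG.isAcyclic (by simp) (endParent_mem_endComponent hG e v) hw
    (adj_endParent hG e v) h

theorem endParent_endParent_ne (v : V) : endParent hG e (endParent hG e v) ≠ v := by
  intro h
  obtain ⟨x, hxv, hxw, hx | hx⟩ :=
    exists_mem_endComponent_and_adj_or hG.connected.preconnected e v (endParent hG e v)
  · rw [endParent_eq_of_mem hG hx hxv] at hxw
    exact notMem_endComponent_self hxw
  · rw [← endParent_eq_of_mem hG hx hxw, h] at hxv
    exact notMem_endComponent_self hxv

theorem adj_iff_endParent_eq_or {v w : V} :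
    G.Adj v w ↔ endParent hG e v = w ∨ endParent hG e w = v := by
  constructor
  · intro h
    obtain ⟨x, hxv, hxw, hx | hx⟩ :=
      exists_mem_endComponent_and_adj_or hG.connected.preconnected e v w
    · exact Or.inr (endParent_eq_of_mem hG h.symm (mem_endComponent_of_adj hxw hx.symm h.ne))
    · exact Or.inl (endParent_eq_of_mem hG h (mem_endComponent_of_adj hxv hx.symm h.ne'))
  · rintro (rfl | rfl)
    · exact adj_endParent hG e v
    · exact (adj_endParent hG e w).symm

theorem mem_endComponent_of_mem_endParent {v x : V} (hx : x ∈ endComponent e {endParent hG e v}) :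
    x ∈ endComponent e {v} := by
  have hv : v ∉ endComponent e {endParent hG e v} := fun h =>
    endParent_endParent_ne hG v (endParent_eq_of_mem hG (adj_endParent hG e v).symm h)
  have hgrand : endParent hG e (endParent hG e v) ∈ endComponent e {v} :=
    mem_endComponent_of_adj (endParent_mem_endComponent hG e v) (adj_endParent hG e _)
      (endParent_endParent_ne hG v)
  refine componentCompl_induction (endParent_mem_endComponent hG e _) hx hgrand ?_
  intro a b _ hb hab ha
  exact mem_endComponent_of_adj ha hab fun h => hv (h ▸ hb)

theorem mem_endComponent_of_mem_iterate_endParent {v x : V} (n : ℕ)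
    (hx : x ∈ endComponent e {(endParent hG e)^[n] v}) : x ∈ endComponent e {v} := by
  induction n with
  | zero => exact hx
  | succ n ih =>
    rw [iterate_succ_apply'] at hx
    exact ih (mem_endComponent_of_mem_endParent hG hx)

theorem exists_iterate_endParent_eq_iterate (v w : V) :
    ∃ m n : ℕ, (endParent hG e)^[m] v = (endParent hG e)^[n] w := by
  obtain ⟨p⟩ := hG.connected v w
  induction p with
  | nil => exact ⟨0, 0, rfl⟩
  | cons h _ ih =>
    obtain ⟨m, n, hmn⟩ := ih
    rcases (adj_iff_endParent_eq_or hG (e := e)).1 h with rfl | rfl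
    · exact ⟨m + 1, n, hmn⟩
    · refine ⟨m, n + 1, ?_⟩
      rw [iterate_succ_apply', ← hmn, ← iterate_succ_apply' (endParent hG e), iterate_succ_apply]

theorem notMem_endComponent_iff {v x : V} :
    x ∉ endComponent e {v} ↔ ∃ n, (endParent hG e)^[n] x = v := by
  constructor
  · contrapose!
    intro hne
    obtain ⟨m, n, hmn⟩ := exists_iterate_endParent_eq_iterate hG (e := e) v x
    obtain _ | m := m
    · exact absurd hmn.symm (hne n)
    have hmem : (endParent hG e)^[n] x ∈ endComponent e {v} := by
      rw [← hmn, iterate_succ_apply']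
      exact mem_endComponent_of_mem_iterate_endParent hG m (endParent_mem_endComponent hG e _)
    clear hmn
    induction n generalizing x with
    | zero => exact hmem
    | succ n ih =>
      exact mem_endComponent_of_adj (ih (fun k => hne (k + 1)) hmem) (adj_endParent hG e x).symm
        (hne 0)
  · rintro ⟨n, rfl⟩ h
    exact notMem_endComponent_self (mem_endComponent_of_mem_iterate_endParent hG n h)

theorem dist_endParent_of_notMem {v x : V} (hx : x ∉ endComponent e {v}) :
    G.dist x (endParent hG e v) = G.dist x v + 1 := by
  classical
  refine (hG.dist_eq_dist_add_one_of_adj x (adj_endParent hG e v)).resolve_left fun hlt => hx ?_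
  obtain ⟨p, hp⟩ := hG.connected.exists_walk_length_eq_dist (endParent hG e v) x
  refine mem_componentCompl_of_walk (endParent_mem_endComponent hG e v) p fun z hz hzv => ?_
  obtain rfl : z = v := by simpa using hzv
  have hdist : G.dist z x ≤ p.length :=
    (dist_le (p.dropUntil z hz)).trans (p.length_dropUntil_le_length hz)
  rw [hp, dist_comm, dist_comm (u := endParent hG e z)] at hdist
  omega

theorem dist_iterate_endParent (v : V) (n : ℕ) : G.dist v ((endParent hG e)^[n] v) = n := by
  induction n with
  | zero => simp
  | succ n ih =>
    rw [iterate_succ_apply',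
      dist_endParent_of_notMem hG ((notMem_endComponent_iff hG).2 ⟨n, rfl⟩), ih]

theorem iterate_endParent_eq_self_iff {v : V} {n : ℕ} :
    (endParent hG e)^[n] v = v ↔ n = 0 := by
  refine ⟨fun h => ?_, fun h => h ▸ rfl⟩
  rw [← dist_iterate_endParent hG (e := e) v n, h, dist_self]

end EndParent

end Graph

namespace TreeDyn

variable {V : Type} {T : TreeDyn V} {infty : T.G.end} {v₀ : V}

local notation "π" => endParent T.isTree infty

/-- A branch vertex is a vertex of valence at least three. -/
def IsBranch (T : TreeDyn V) (v : V) : Prop :=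
  3 ≤ (T.G.neighborSet v).ncard

theorem below_iff {v x : V} : T.Below infty v x ↔ ∃ n, π^[n] x = v := by
  rw [← notMem_endComponent_iff]
  constructor
  · rintro (rfl | ⟨_, hne⟩)
    · exact notMem_endComponent_self
    · rintro ⟨_, hx⟩
      exact hne hx
  · intro h
    by_cases hx : x = v
    · exact Or.inl hx
    · exact Or.inr ⟨by simpa using hx, fun he => h ⟨_, he⟩⟩

section Children

open Classical in
/-- The children of `v` are the vertices whose parent is `v`, equivalently all neighbours of `v`
except its own parent. -/
noncomputable def children (T : TreeDyn V) (infty : T.G.end) (v : V) : Finset V :=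
  {c ∈ (T.locFin v).toFinset | endParent T.isTree infty c = v}

theorem mem_children {v c : V} : c ∈ T.children infty v ↔ π c = v := by
  simp only [children, Finset.mem_filter, Set.Finite.mem_toFinset, mem_neighborSet,
    and_iff_right_iff_imp]
  rintro rfl
  exact (adj_endParent T.isTree infty c).symm

theorem parent_notMem_children (v : V) : π v ∉ T.children infty v := fun h =>
  endParent_endParent_ne T.isTree v (mem_children.1 h)

theorem coe_insert_parent_children [DecidableEq V] (v : V) :
    ((insert (π v) (T.children infty v) : Finset V) : Set V) = T.G.neighborSet v := by
  ext w
  simp only [Finset.coe_insert, Set.mem_insert_iff, Finset.mem_coe, mem_children, mem_neighborSet,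
    adj_iff_endParent_eq_or T.isTree (e := infty), eq_comm (a := w)]

theorem isBranch_iff_one_lt_card_children {v : V} :
    T.IsBranch v ↔ 1 < (T.children infty v).card := by
  classical
  rw [IsBranch, ← coe_insert_parent_children (infty := infty), Set.ncard_coe_finset,
    Finset.card_insert_of_notMem (parent_notMem_children v)]
  omega

theorem isBranch_of_parent_eq {x y : V} (hne : x ≠ y) (h : π x = π y) : T.IsBranch (π x) :=
  isBranch_iff_one_lt_card_children.2 <|
    Finset.one_lt_card.2 ⟨x, mem_children.2 rfl, y, mem_children.2 h.symm, hne⟩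

end Children

section Height

theorem IsBase.exists_iterate_parent_eq (hbase : T.IsBase infty v₀) {w : V} (hw : T.IsBranch w) :
    ∃ n, π^[n] w = v₀ :=
  below_iff.1 (hbase.2 w hw)

theorem IsBase.eq_iterate_of_parent_eq (hbase : T.IsBase infty v₀) {x : V} {n : ℕ}
    (h : π x = π^[n + 1] v₀) : x = π^[n] v₀ := by
  by_contra hne
  have hbranch : T.IsBranch (π x) :=
    isBranch_of_parent_eq hne (h.trans (iterate_succ_apply' _ n v₀))
  obtain ⟨k, hk⟩ := hbase.exists_iterate_parent_eq hbranch
  rw [h, ← iterate_add_apply, iterate_endParent_eq_self_iff] at hk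
  omega

theorem IsBase.exists_iterate_parent_eq_or (hbase : T.IsBase infty v₀) (v : V) :
    (∃ n, π^[n] v₀ = v) ∨ ∃ n, π^[n] v = v₀ := by
  obtain ⟨m, n, hmn⟩ := exists_iterate_endParent_eq_iterate T.isTree (e := infty) v v₀
  induction m generalizing n with
  | zero => exact Or.inl ⟨n, hmn.symm⟩
  | succ m ih =>
    cases n with
    | zero => exact Or.inr ⟨m + 1, hmn⟩
    | succ n =>
      rw [iterate_succ_apply'] at hmn
      exact ih n (hbase.eq_iterate_of_parent_eq hmn)

theorem height_iterate_parent (n : ℕ) : T.height infty v₀ (π^[n] v₀) = n := by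
  rw [height, if_pos (below_iff.2 ⟨n, rfl⟩), dist_iterate_endParent]

theorem height_of_iterate_parent_eq {n : ℕ} {v : V} (h : π^[n] v = v₀) :
    T.height infty v₀ v = -n := by
  have hdist : T.G.dist v₀ v = n := by
    rw [dist_comm, ← h, dist_iterate_endParent]
  by_cases hv : T.Below infty v v₀
  · obtain ⟨k, hk⟩ := below_iff.1 hv
    rw [← h, ← iterate_add_apply, iterate_endParent_eq_self_iff] at hk
    obtain rfl : n = 0 := by omega
    simp [height, hdist]
  · rw [height, if_neg hv, hdist]

theorem IsBase.height_parent (hbase : T.IsBase infty v₀) (v : V) :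
    T.height infty v₀ (π v) = T.height infty v₀ v + 1 := by
  rcases hbase.exists_iterate_parent_eq_or v with ⟨n, rfl⟩ | ⟨_ | n, hn⟩
  · rw [← iterate_succ_apply' π, height_iterate_parent, height_iterate_parent, Nat.cast_succ]
  · obtain rfl : v = v₀ := hn
    exact (height_iterate_parent 1).trans (by simp [height])
  · rw [height_of_iterate_parent_eq hn, height_of_iterate_parent_eq (n := n) hn]
    push_cast
    ring

theorem IsBase.height_nonpos (hbase : T.IsBase infty v₀) {w : V} (hw : T.IsBranch w) :
    T.height infty v₀ w ≤ 0 := by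
  obtain ⟨n, hn⟩ := hbase.exists_iterate_parent_eq hw
  rw [height_of_iterate_parent_eq hn]
  omega

variable {N : ℤ}

theorem IsBase.commute_parent (hbase : T.IsBase infty v₀)
    (hN : ∀ v, T.height infty v₀ (T.F v) = T.height infty v₀ v + N) :
    Function.Commute T.F π := by
  intro v
  rcases (adj_iff_endParent_eq_or T.isTree (e := infty)).1
    (T.adjMap (adj_endParent T.isTree infty v)) with h | h
  · exact h.symm
  · have hdown := hbase.height_parent (T.F (π v))
    have hup := hbase.height_parent v
    rw [h, hN, hN] at hdown
    omega

theorem height_iterate (hN : ∀ v, T.height infty v₀ (T.F v) = T.height infty v₀ v + N)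
    (n : ℕ) (v : V) : T.height infty v₀ (T.F^[n] v) = T.height infty v₀ v + n * N := by
  have hsemiconj : Semiconj (T.height infty v₀) T.F (· + N) := hN
  rw [hsemiconj.iterate_right n v, add_right_iterate, nsmul_eq_mul]

theorem GrandOrbit.height_modEq {v w : V} (h : T.GrandOrbit v w)
    (hN : ∀ v, T.height infty v₀ (T.F v) = T.height infty v₀ v + N) :
    T.height infty v₀ v ≡ T.height infty v₀ w [ZMOD N] := by
  obtain ⟨n, m, -, -, hnm⟩ := h
  have hheight := congrArg (T.height infty v₀) hnm
  rw [height_iterate hN, height_iterate hN] at hheight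
  exact Int.modEq_iff_add_fac.2 ⟨n - m, by linear_combination -hheight⟩

end Height

section LocalDegree

variable {dV : V → ℕ} {dE : V → V → ℕ}

theorem map_ne_map_parent_parent (hF : Function.Commute T.F π) (c : V) :
    T.F c ≠ T.F (π (π c)) := by
  rw [hF, hF]
  exact (endParent_endParent_ne T.isTree _).symm

theorem IsLocalDeg.edge_parent_s13 (hdeg : T.IsLocalDeg dV dE) (hF : Function.Commute T.F π) (v : V) :
    dE v (π v) = dV v := by
  have hfiber : {w | T.G.Adj v w ∧ T.F w = T.F (π v)} = {π v} := by
    ext w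
    rw [Set.mem_ofPred_eq, adj_iff_endParent_eq_or T.isTree (e := infty), Set.mem_singleton_iff]
    constructor
    · rintro ⟨rfl | rfl, hw⟩
      · rfl
      · exact absurd hw (map_ne_map_parent_parent hF w)
    · rintro rfl
      exact ⟨Or.inl rfl, rfl⟩
  obtain ⟨-, -, -, -, hlocal⟩ := hdeg
  rw [hlocal (adj_endParent T.isTree infty v), hfiber, finsum_mem_singleton]

theorem IsLocalDeg.edge_child (hdeg : T.IsLocalDeg dV dE) (hF : Function.Commute T.F π) {v c : V}
    (hc : c ∈ T.children infty v) : dE v c = dV c := by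
  rw [hdeg.1, ← mem_children.1 hc, hdeg.edge_parent_s13 hF]

theorem IsLocalDeg.sum_children_fiber [DecidableEq V] (hdeg : T.IsLocalDeg dV dE)
    (hF : Function.Commute T.F π) {v c : V} (hc : c ∈ T.children infty v) :
    ∑ b ∈ T.children infty v with T.F b = T.F c, dV b = dV v := by
  obtain rfl := mem_children.1 hc
  have hfiber : {w | T.G.Adj (π c) w ∧ T.F w = T.F c} =
      (({b ∈ T.children infty (π c) | T.F b = T.F c} : Finset V) : Set V) := by
    ext w
    simp only [Set.mem_ofPred_eq, Finset.coe_filter, mem_children]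
    refine and_congr_left fun hw => ?_
    rw [adj_iff_endParent_eq_or T.isTree (e := infty), or_iff_right]
    rintro rfl
    exact map_ne_map_parent_parent hF c hw.symm
  have hadj : T.G.Adj (π c) c := (adj_endParent T.isTree infty c).symm
  have hlocal := hdeg.2.2.2.2 hadj
  rw [hfiber, finsum_mem_coe_finset] at hlocal
  rw [hlocal]
  exact Finset.sum_congr rfl fun b hb => (hdeg.edge_child hF (Finset.mem_filter.1 hb).1).symm

theorem IsLocalDeg.multV_add_sum_children (hdeg : T.IsLocalDeg dV dE)
    (hF : Function.Commute T.F π) (v : V) :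
    T.multV dV dE v + ∑ c ∈ T.children infty v, (dV c - 1) = dV v - 1 := by
  classical
  have hedges : ∑ᶠ w ∈ T.G.neighborSet v, (dE v w - 1) =
      (dV v - 1) + ∑ c ∈ T.children infty v, (dV c - 1) := by
    rw [← coe_insert_parent_children (infty := infty), finsum_mem_coe_finset,
      Finset.sum_insert (parent_notMem_children v), hdeg.edge_parent_s13 hF,
      Finset.sum_congr rfl fun c hc => by rw [hdeg.edge_child hF hc]]
  obtain ⟨-, hpos, -, hRH, -⟩ := hdeg
  have := hpos v
  have := hRH v
  rw [multV]
  omega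

theorem IsLocalDeg.sum_multV_le (hdeg : T.IsLocalDeg dV dE) (hF : Function.Commute T.F π) {v : V}
    {S : Finset V} (hS : ∀ w ∈ S, ∃ n, π^[n] w = v) : ∑ w ∈ S, T.multV dV dE w ≤ dV v - 1 :=
  sum_le_of_add_sum_children_le (p := π) (m := fun v => dV v - 1) (fun _ => mem_children.2 rfl)
    (fun v => (hdeg.multV_add_sum_children hF v).le) hS

theorem IsLocalDeg.multV_add_one_eq_card_children (hdeg : T.IsLocalDeg dV dE)
    (hF : Function.Commute T.F π) {v c : V} (hc : c ∈ T.children infty v)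
    (hconst : ∀ b ∈ T.children infty v, T.F b = T.F c) :
    T.multV dV dE v + 1 = (T.children infty v).card := by
  classical
  have hmult := hdeg.multV_add_sum_children hF v
  have hsum := hdeg.sum_children_fiber hF hc
  rw [Finset.filter_true_of_mem hconst] at hsum
  obtain ⟨-, hpos, -⟩ := hdeg
  have hsplit : ∑ b ∈ T.children infty v, dV b =
      ∑ b ∈ T.children infty v, (dV b - 1) + (T.children infty v).card := by
    rw [Finset.card_eq_sum_ones, ← Finset.sum_add_distrib]
    exact Finset.sum_congr rfl fun b _ => (Nat.sub_add_cancel (hpos b)).symm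
  have := hpos v
  omega

theorem IsLocalDeg.multV_pos_of_isBranch (hdeg : T.IsLocalDeg dV dE) (hF : Function.Commute T.F π)
    {v : V} (hv : T.IsBranch v) (hFv : ¬ T.IsBranch (T.F v)) : 0 < T.multV dV dE v := by
  rw [isBranch_iff_one_lt_card_children (infty := infty)] at hv
  obtain ⟨c, hc⟩ : (T.children infty v).Nonempty := Finset.card_pos.1 (by omega)
  have hconst : ∀ b ∈ T.children infty v, T.F b = T.F c := by
    intro b hb
    by_contra hne
    have hparent : ∀ {a}, a ∈ T.children infty v → π (T.F a) = T.F v := fun ha => by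
      rw [← hF, mem_children.1 ha]
    exact hFv (hparent hb ▸ isBranch_of_parent_eq hne ((hparent hb).trans (hparent hc).symm))
  have := hdeg.multV_add_one_eq_card_children hF hc hconst
  omega

end LocalDegree

theorem IsGlobalDeg.edge_le {dE : V → V → ℕ} {Dg : ℕ} (hDg : T.IsGlobalDeg dE Dg) {v w : V}
    (h : T.G.Adj v w) : dE v w ≤ Dg := by
  have hfin : {b | T.G.Adj v b ∧ T.F b = T.F w}.Finite := (T.locFin v).subset fun _ hb => hb.1
  calc dE v w
      ≤ ∑ᶠ b ∈ {b | T.G.Adj v b ∧ T.F b = T.F w}, dE v b :=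
        single_le_finsum_mem hfin (dE v) ⟨h, rfl⟩
    _ ≤ ∑ᶠ a ∈ {a | T.F a = T.F v}, ∑ᶠ b ∈ {b | T.G.Adj a b ∧ T.F b = T.F w}, dE a b :=
        single_le_finsum_mem (T.finFibers (T.F v))
          (fun a => ∑ᶠ b ∈ {b | T.G.Adj a b ∧ T.F b = T.F w}, dE a b) rfl
    _ = Dg := (hDg (T.adjMap h)).symm

section LastBranch

variable {N : ℕ}

theorem IsBase.exists_isBranch_not_isBranch_map (hbase : T.IsBase infty v₀) (hN0 : 0 < N)
    (hN : ∀ v, T.height infty v₀ (T.F v) = T.height infty v₀ v + N) {w : V} (hw : T.IsBranch w) :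
    ∃ u, T.IsBranch u ∧ ¬ T.IsBranch (T.F u) ∧
      T.height infty v₀ u ≡ T.height infty v₀ w [ZMOD N] := by
  by_contra! hcon
  let P (u : V) : Prop := T.IsBranch u ∧ T.height infty v₀ u ≡ T.height infty v₀ w [ZMOD N]
  have hmap : ∀ u, P u → P (T.F u) := by
    rintro u ⟨hu, hmod⟩
    refine ⟨by_contra fun h => hcon u hu h hmod, ?_⟩
    rw [hN]
    exact Int.add_modEq_right.trans hmod
  have horbit : ∀ k, P (T.F^[k] w) := Iterate.rec P ⟨hw, rfl⟩ hmap
  have hle := hbase.height_nonpos (horbit ((T.height infty v₀ w).natAbs + 1)).1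
  rw [height_iterate hN] at hle
  push_cast at hle
  have hN1 : (1 : ℤ) ≤ N := by exact_mod_cast hN0
  nlinarith [hN1, neg_abs_le (T.height infty v₀ w), abs_nonneg (T.height infty v₀ w)]

theorem IsPolyLike.exists_isBranch_height_modEq (hpl : T.IsPolyLike infty)
    (hbase : T.IsBase infty v₀) (hN0 : 0 < N)
    (hN : ∀ v, T.height infty v₀ (T.F v) = T.height infty v₀ v + N) (i : ℕ) :
    ∃ w, T.IsBranch w ∧ ¬ T.IsBranch (T.F w) ∧ T.height infty v₀ w ≡ i [ZMOD N] := by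
  obtain ⟨-, -, -, -, horbit⟩ := hpl
  obtain ⟨w, hgrand, hw⟩ := horbit (π^[i] v₀)
  obtain ⟨u, hu, hFu, hmod⟩ := hbase.exists_isBranch_not_isBranch_map hN0 hN hw
  have hheight := hgrand.height_modEq hN
  rw [height_iterate_parent] at hheight
  exact ⟨u, hu, hFu, hmod.trans hheight.symm⟩

end LastBranch

end TreeDyn

/-- **Bound on the translation constant.**
Let `F : T → T` be a polynomial-like branched covering with global degree
`Dg = deg F`, base `v₀`, and let `N = N(F)` be the positive integer with
`h(F v) = h(v) + N` for all vertices `v`.  Then `N ≤ Dg − 1`. -/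
theorem translation_constant_le
    {V : Type} (T : TreeDyn V) (infty : T.G.end)
    (hpl : T.IsPolyLike infty)
    (dV : V → ℕ) (dE : V → V → ℕ) (hdeg : T.IsLocalDeg dV dE)
    (v₀ : V) (hbase : T.IsBase infty v₀)
    (Dg : ℕ) (hDg : T.IsGlobalDeg dE Dg)
    (N : ℕ) (hN0 : 0 < N)
    (hN : ∀ v : V, T.height infty v₀ (T.F v) = T.height infty v₀ v + (N : ℤ)) :
    N ≤ Dg - 1 := by
  have hF := hbase.commute_parent hN
  choose w hw hFw hmod using fun i : Fin N => hpl.exists_isBranch_height_modEq hbase hN0 hN i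
  have hinj : Injective w := fun i j hij => Fin.ext <|
    (Int.natCast_modEq_iff.1 ((hmod i).symm.trans (hij ▸ hmod j))).eq_of_lt_of_lt i.2 j.2
  have hbelow : ∀ u ∈ Finset.univ.map ⟨w, hinj⟩, ∃ n, (endParent T.isTree infty)^[n] u = v₀ := by
    simpa using fun i => hbase.exists_iterate_parent_eq (hw i)
  calc N = ∑ _i : Fin N, 1 := by simp
    _ ≤ ∑ i, T.multV dV dE (w i) :=
        Finset.sum_le_sum fun i _ => hdeg.multV_pos_of_isBranch hF (hw i) (hFw i)
    _ = ∑ u ∈ Finset.univ.map ⟨w, hinj⟩, T.multV dV dE u := by simp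
    _ ≤ dV v₀ - 1 := hdeg.sum_multV_le hF hbelow
    _ = dE v₀ (endParent T.isTree infty v₀) - 1 := by rw [hdeg.edge_parent_s13 hF]
    _ ≤ Dg - 1 := Nat.sub_le_sub_right (hDg.edge_le (adj_endParent T.isTree infty v₀)) 1
end
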